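/- Let (t_k)_{k≥1} be a sequence of real numbers. Then (1/n)∑_{j=1}^n t_{p_j} converges as n → ∞ if and only if (1/N)∑_{j=1}^{π(N)} t_{p_j} log p_j converges as N → ∞. -/

import Mathlib

open Filter Finset

/-!
With `S` the summatory function of a nonnegative `f` and `β u = e^{-u} S(e^u) - A`, continuity of
`∑ f n / n ^ s - A / (s - 1)` up to the line `re s = 1` says that the Laplace transform of `β`
extends continuously to the imaginary axis. Integrating `β` against translates of the Fourier
transform of a compactly supported function moves the integral to that axis, where the
Riemann–Lebesgue lemma makes it vanish in the limit; with a nonnegative kernel, dilated to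
concentrate, this shows that `β` takes values below any `η > 0`, and so does `-β`, on every short
interval far out. As `S` is monotone, `β` drops by little on short intervals, so `β → 0`
(Wiener–Ikehara). Applied to the von Mangoldt function, whose Dirichlet series is controlled by the
nonvanishing of Dirichlet `L`-functions on `re s = 1`, this is the prime number theorem `θ x ~ x`.

By the prime number theorem `N⁻¹ ∑_{p_j ≤ N} t_{p_j} log p_j` has the same limits as the mean of
`t_{p_j}` with weights `log p_j`. These weights increase, and Chebyshev's bound gives
`n log p_n = O(∑_{j ≤ n} log p_j)`, so Abel summation converts weighted into unweighted means and
back (Hardy's comparison of Riesz means).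
-/

section Laplace

open MeasureTheory Complex Real Topology FourierTransform

/-- The Laplace transform `s ↦ ∫₀^∞ e^{-su} β(u) du`, with value `0` where the integral diverges. -/
noncomputable def laplaceTransform (β : ℝ → ℂ) (s : ℂ) : ℂ :=
  ∫ u in Set.Ioi (0 : ℝ), cexp (-(s * u)) * β u

variable {β : ℝ → ℂ} {M : ℝ}

lemma integrableOn_exp_neg_mul_Ioi_mul_of_bounded (hβ : Measurable β) (hM : ∀ u > 0, ‖β u‖ ≤ M)
    {s : ℂ} (hs : 0 < s.re) : IntegrableOn (fun u : ℝ ↦ cexp (-(s * u)) * β u) (Set.Ioi 0) := by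
  have hexp : IntegrableOn (fun u : ℝ ↦ cexp (-s * u)) (Set.Ioi 0) :=
    integrableOn_exp_mul_complex_Ioi (by simpa using hs) 0
  simp only [neg_mul] at hexp
  exact hexp.mul_bdd hβ.aestronglyMeasurable ((ae_restrict_mem measurableSet_Ioi).mono hM)

lemma integral_exp_mul_fourier_sub_eq (hβ : Measurable β) (hM : ∀ u > 0, ‖β u‖ ≤ M)
    {h : ℝ → ℂ} (hh : Integrable h) {ε : ℝ} (hε : 0 < ε) (y : ℝ) :
    ∫ u : ℝ in Set.Ioi 0, cexp (-(ε * u)) * β u * 𝓕 h (u - y) =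
      ∫ t : ℝ, 𝐞 (y * t) • (laplaceTransform β (ε + 2 * π * t * I) * h t) := by
  have hg : Integrable (fun t ↦ 𝐞 (y * t) • h t) := by
    simpa using (Real.fourierIntegral_convergent_iff (f := h) (-y)).2 hh
  have hflip := VectorFourier.integral_fourierIntegral_smul_eq_flip (L := innerₗ ℝ)
    Real.continuous_fourierChar continuous_inner
    (integrableOn_exp_neg_mul_Ioi_mul_of_bounded hβ hM (s := ε) (by simpa using hε)) hg
  have hleft (t : ℝ) : VectorFourier.fourierIntegral 𝐞 (volume.restrict (Set.Ioi 0)) (innerₗ ℝ)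
      (fun u ↦ cexp (-(ε * u)) * β u) t = laplaceTransform β (ε + 2 * π * t * I) := by
    simp only [VectorFourier.fourierIntegral, laplaceTransform, Circle.smul_def, smul_eq_mul,
      Real.fourierChar_apply, ← mul_assoc, ← Complex.exp_add]
    refine integral_congr_ae (.of_forall fun u ↦ ?_)
    refine congrArg (cexp · * β u) ?_
    simp
    ring
  have hright (u : ℝ) : VectorFourier.fourierIntegral 𝐞 volume (innerₗ ℝ).flip
      (fun t ↦ 𝐞 (y * t) • h t) u = 𝓕 h (u - y) := by
    simp only [VectorFourier.fourierIntegral, Real.fourier_real_eq, smul_smul,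
      ← AddChar.map_add_eq_mul]
    refine integral_congr_ae (.of_forall fun t ↦ ?_)
    simp
    ring_nf
  simp only [hleft, hright, smul_eq_mul] at hflip
  rw [← hflip]
  simp only [mul_smul_comm]

lemma tendsto_integral_exp_neg_mul_nhdsGT_zero {φ : ℝ → ℂ} (hφ : IntegrableOn φ (Set.Ioi 0)) :
    Tendsto (fun ε : ℝ ↦ ∫ u : ℝ in Set.Ioi 0, cexp (-(ε * u)) * φ u) (𝓝[>] 0)
      (𝓝 (∫ u in Set.Ioi 0, φ u)) := by
  refine tendsto_integral_filter_of_dominated_convergence (fun u ↦ ‖φ u‖)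
    (.of_forall fun ε ↦ AEStronglyMeasurable.mul (by fun_prop) hφ.aestronglyMeasurable) ?_ hφ.norm
    (.of_forall fun u ↦ ?_)
  · filter_upwards [self_mem_nhdsWithin] with ε (hε : 0 < ε)
    filter_upwards [ae_restrict_mem measurableSet_Ioi] with u (hu : 0 < u)
    have hexp : ‖cexp (-(ε * u))‖ ≤ 1 := by
      simpa [Complex.norm_exp] using (mul_pos hε hu).le
    rw [norm_mul]
    exact mul_le_of_le_one_left (norm_nonneg _) hexp
  · refine Tendsto.mono_left ?_ nhdsWithin_le_nhds
    exact Continuous.tendsto' (by fun_prop) 0 _ (by simp)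

lemma integral_mul_fourier_sub_eq_of_eqOn_laplaceTransform (hβ : Measurable β)
    (hM : ∀ u > 0, ‖β u‖ ≤ M) {F : ℂ → ℂ} (hF : ContinuousOn F {s | 0 ≤ s.re})
    (hβF : Set.EqOn (laplaceTransform β) F {s | 0 < s.re}) {h : ℝ → ℂ} (hc : Continuous h)
    (hs : HasCompactSupport h) (hh : Integrable (𝓕 h)) (y : ℝ) :
    ∫ u in Set.Ioi 0, β u * 𝓕 h (u - y) = ∫ t : ℝ, 𝐞 (y * t) • (F (2 * π * t * I) * h t) := by
  have hint : IntegrableOn (fun u ↦ β u * 𝓕 h (u - y)) (Set.Ioi 0) :=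
    (hh.comp_sub_right y).integrableOn.bdd_mul hβ.aestronglyMeasurable
      ((ae_restrict_mem measurableSet_Ioi).mono hM)
  have hleft := tendsto_integral_exp_neg_mul_nhdsGT_zero hint
  simp only [← mul_assoc] at hleft
  have hright : ContinuousOn
      (fun ε : ℝ ↦ ∫ t : ℝ, 𝐞 (y * t) • (F (ε + 2 * π * t * I) * h t)) (Set.Ici 0) := by
    refine continuousOn_integral_of_compact_support hs ?_ fun ε t _ ht ↦ ?_
    · simp only [Function.uncurry_def, Circle.smul_def, smul_eq_mul]
      have hF' : ContinuousOn (fun p : ℝ × ℝ ↦ F (p.1 + 2 * π * p.2 * I))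
          (Set.Ici 0 ×ˢ Set.univ) :=
        hF.comp (by fun_prop) fun p hp ↦ by simpa using hp.1
      exact (by fun_prop : Continuous fun p : ℝ × ℝ ↦ (𝐞 (y * p.2) : ℂ)).continuousOn.mul
        (hF'.mul (by fun_prop))
    · simp [image_eq_zero_of_notMem_tsupport ht]
  have hright' := (hright 0 Set.self_mem_Ici).mono_left (nhdsWithin_mono 0 Set.Ioi_subset_Ici_self)
  simp only [ofReal_zero, zero_add] at hright'
  refine tendsto_nhds_unique hleft (hright'.congr' ?_)
  filter_upwards [self_mem_nhdsWithin] with ε (hε : 0 < ε)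
  rw [integral_exp_mul_fourier_sub_eq hβ hM (hc.integrable_of_hasCompactSupport hs) hε]
  have hext (t : ℝ) : laplaceTransform β (ε + 2 * π * t * I) = F (ε + 2 * π * t * I) :=
    hβF (by simpa using hε)
  simp only [hext]

/-- The Laplace transform of `β` extends continuously from the open right half-plane to the closed
one, the boundary hypothesis of the Wiener–Ikehara theorem. -/
def LaplaceTransformExtends (β : ℝ → ℂ) : Prop :=
  ∃ F : ℂ → ℂ, ContinuousOn F {s | 0 ≤ s.re} ∧ Set.EqOn (laplaceTransform β) F {s | 0 < s.re}

lemma LaplaceTransformExtends.tendsto_integral_mul_fourier_sub (hext : LaplaceTransformExtends β)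
    (hβ : Measurable β) (hM : ∀ u > 0, ‖β u‖ ≤ M) {h : ℝ → ℂ} (hc : Continuous h)
    (hs : HasCompactSupport h) (hh : Integrable (𝓕 h)) :
    Tendsto (fun y ↦ ∫ u in Set.Ioi 0, β u * 𝓕 h (u - y)) atTop (𝓝 0) := by
  obtain ⟨F, hF, hβF⟩ := hext
  have hRL := (Real.tendsto_integral_exp_smul_cocompact fun t ↦ F (2 * π * t * I) * h t).comp
    (tendsto_neg_atTop_atBot.mono_right atBot_le_cocompact)
  refine hRL.congr fun y ↦ ?_
  rw [integral_mul_fourier_sub_eq_of_eqOn_laplaceTransform hβ hM hF hβF hc hs hh]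
  simp [mul_comm]

lemma LaplaceTransformExtends.neg (hext : LaplaceTransformExtends β) :
    LaplaceTransformExtends fun u ↦ -β u := by
  obtain ⟨F, hF, hβF⟩ := hext
  refine ⟨fun s ↦ -F s, hF.neg, fun s hs ↦ ?_⟩
  simp only [← hβF hs, laplaceTransform, mul_neg, integral_neg]

lemma laplaceTransform_comp_mul_left (β : ℝ → ℂ) {l : ℝ} (hl : 0 < l) (s : ℂ) :
    laplaceTransform (fun u ↦ β (l * u)) s = (l : ℂ)⁻¹ * laplaceTransform β (s / l) := by
  have hcomp := integral_comp_mul_left_Ioi (fun u ↦ cexp (-(s / l * u)) * β u) 0 hl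
  have hl' : (l : ℂ) ≠ 0 := mod_cast hl.ne'
  simp only [mul_zero, real_smul, ofReal_mul, ofReal_inv, ← mul_assoc, div_mul_cancel₀ _ hl']
    at hcomp
  exact hcomp

lemma LaplaceTransformExtends.comp_mul_left (hext : LaplaceTransformExtends β) {l : ℝ}
    (hl : 0 < l) : LaplaceTransformExtends fun u ↦ β (l * u) := by
  obtain ⟨F, hF, hβF⟩ := hext
  refine ⟨fun s ↦ (l : ℂ)⁻¹ * F (s / l), ?_, fun s (hs : 0 < s.re) ↦ ?_⟩
  · refine continuousOn_const.mul (hF.comp (by fun_prop) fun s (hs : 0 ≤ s.re) ↦ ?_)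
    simpa [Complex.div_ofReal_re] using div_nonneg hs hl.le
  · have hsl : 0 < (s / l).re := by simpa [Complex.div_ofReal_re] using div_pos hs hl
    rw [laplaceTransform_comp_mul_left β hl, hβF hsl]

end Laplace

section Kernel

open MeasureTheory Real FourierTransform Convolution ComplexConjugate

lemma fourier_conj_comp_neg (φ : ℝ → ℂ) (x : ℝ) :
    𝓕 (fun t ↦ conj (φ (-t))) x = conj (𝓕 φ x) := by
  rw [Real.fourier_real_eq, Real.fourier_real_eq, ← integral_conj, ← integral_neg_eq_self]
  simp [Circle.smul_def]

lemma exists_hasCompactSupport_fourier_eq_nonneg : ∃ (h : ℝ → ℂ) (K : ℝ → ℝ),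
    Continuous h ∧ HasCompactSupport h ∧ (∀ x, 𝓕 h x = K x) ∧ (∀ x, 0 ≤ K x) ∧
      Integrable K ∧ 0 < ∫ x, K x := by
  -- For `f` real and even, `𝓕 f` is real, so the Fourier transform of `f ⋆ f` is a square.
  let φ : ContDiffBump (0 : ℝ) := default
  let f : ℝ → ℂ := fun t ↦ φ t
  have hf : HasCompactSupport f := φ.hasCompactSupport.comp_left Complex.ofReal_zero
  have hfc : Continuous f := Complex.continuous_ofReal.comp φ.continuous
  let Φ : SchwartzMap ℝ ℂ := 𝓕 (hf.toSchwartzMap (Complex.ofRealCLM.contDiff.comp φ.contDiff))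
  have hconj (x : ℝ) : conj (𝓕 f x) = 𝓕 f x := by
    rw [← fourier_conj_comp_neg]
    simp only [f, φ.neg, Complex.conj_ofReal]
  have hzero : 𝓕 f 0 ≠ 0 := by
    simpa [Real.fourier_real_eq, f, integral_complex_ofReal] using φ.integral_pos.ne'
  have hΦ : ⇑Φ = 𝓕 f := SchwartzMap.fourier_coe _
  have hint : Integrable fun x ↦ ‖𝓕 f x‖ ^ 2 :=
    hΦ ▸ (Φ.memLp 2 volume).integrable_norm_pow two_ne_zero
  refine ⟨f ⋆[ContinuousLinearMap.mul ℂ ℂ] f, fun x ↦ ‖𝓕 f x‖ ^ 2,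
    hf.continuous_convolution_left _ hfc hfc.locallyIntegrable, hf.convolution _ hf, fun x ↦ ?_,
    fun x ↦ by positivity, hint, ?_⟩
  · have hfi : Integrable f := hfc.integrable_of_hasCompactSupport hf
    rw [Real.fourier_mul_convolution_eq hfi hfi, Complex.ofReal_pow, ← Complex.conj_mul', hconj]
  · exact integral_pos_of_integrable_nonneg_nonzero (x := 0) ((hΦ ▸ Φ.continuous).norm.pow 2) hint
      (fun x ↦ sq_nonneg _) (by simpa using hzero)

end Kernel

section Tauberian

open MeasureTheory Complex Real Topology FourierTransform

lemma exists_pos_lt_mul_setIntegral_Icc {K : ℝ → ℝ} (hK : Integrable K) (hpos : 0 < ∫ x, K x)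
    {η : ℝ} (hη : 0 < η) (M : ℝ) :
    ∃ R > 0, M * ∫ x, K x < (η + M) * ∫ x in Set.Icc (-R) R, K x := by
  have hlim : Tendsto (fun R ↦ (η + M) * ∫ x in Set.Icc (-R) R, K x) atTop
      (𝓝 ((η + M) * ∫ x, K x)) :=
    ((aecover_Icc tendsto_neg_atTop_atBot tendsto_id).integral_tendsto_of_countably_generated
      hK).const_mul _
  have hlt : M * ∫ x, K x < (η + M) * ∫ x, K x := by
    rw [add_mul]
    exact lt_add_of_pos_left _ (mul_pos hη hpos)
  exact ((eventually_gt_atTop 0).and (hlim.eventually_const_lt hlt)).exists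

lemma mul_setIntegral_Icc_sub_le_integral_mul {K γ : ℝ → ℝ} (hK : Integrable K)
    (hKnonneg : ∀ x, 0 ≤ K x) (hγ : Measurable γ) {M : ℝ} (hM : ∀ u > 0, |γ u| ≤ M)
    {η R y : ℝ} (hRy : R < y) (hη : ∀ u ∈ Set.Icc (y - R) (y + R), η ≤ γ u) :
    (η + M) * (∫ x in Set.Icc (-R) R, K x) - M * ∫ x, K x ≤
      ∫ u in Set.Ioi 0, γ u * K (u - y) := by
  have hM0 : 0 ≤ M := (abs_nonneg _).trans (hM 1 one_pos)
  have hshift : Integrable fun u ↦ K (u - y) := hK.comp_sub_right y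
  have hrhs : IntegrableOn (fun u ↦ γ u * K (u - y)) (Set.Ioi 0) :=
    hshift.integrableOn.bdd_mul hγ.aestronglyMeasurable
      ((ae_restrict_mem measurableSet_Ioi).mono hM)
  have hind : Integrable ((Set.Icc (-R) R).indicator fun x ↦ (η + M) * K x) :=
    (hK.const_mul _).indicator measurableSet_Icc
  let k : ℝ → ℝ := fun x ↦ (Set.Icc (-R) R).indicator (fun x ↦ (η + M) * K x) x - M * K x
  have hk : Integrable k := hind.sub (hK.const_mul M)
  calc (η + M) * (∫ x in Set.Icc (-R) R, K x) - M * ∫ x, K x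
      = ∫ x, k x := by
        rw [integral_sub hind (hK.const_mul M), integral_indicator measurableSet_Icc,
          integral_const_mul, integral_const_mul]
    _ = ∫ u, k (u - y) := (integral_sub_right_eq_self k y).symm
    _ ≤ ∫ u, (Set.Ioi 0).indicator (fun u ↦ γ u * K (u - y)) u := by
        refine integral_mono (hk.comp_sub_right y) (hrhs.integrable_indicator measurableSet_Ioi)
          fun u ↦ ?_
        have hKu := hKnonneg (u - y)
        by_cases hu : u - y ∈ Set.Icc (-R) R
        · have hu0 : 0 < u := by linarith [hu.1]
          have hηu : η ≤ γ u := hη u ⟨by linarith [hu.1], by linarith [hu.2]⟩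
          simp only [k, Set.indicator_of_mem hu, Set.indicator_of_mem (Set.mem_Ioi.2 hu0)]
          nlinarith
        · simp only [k, Set.indicator_of_notMem hu, zero_sub]
          by_cases hu0 : u ∈ Set.Ioi 0
          · rw [Set.indicator_of_mem hu0]
            nlinarith [neg_le_of_abs_le (hM u hu0)]
          · rw [Set.indicator_of_notMem hu0]
            nlinarith
    _ = ∫ u in Set.Ioi 0, γ u * K (u - y) := integral_indicator measurableSet_Ioi

lemma exists_eventually_exists_mem_Icc_lt {η : ℝ} (hη : 0 < η) (M : ℝ) :
    ∃ R > 0, ∀ γ : ℝ → ℝ, Measurable γ → (∀ u > 0, |γ u| ≤ M) →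
      LaplaceTransformExtends (fun u ↦ γ u) →
        ∀ᶠ y in atTop, ∃ u ∈ Set.Icc (y - R) (y + R), γ u < η := by
  obtain ⟨h, K, hc, hs, hhK, hKnonneg, hK, hKpos⟩ := exists_hasCompactSupport_fourier_eq_nonneg
  obtain ⟨R, hR, hlt⟩ := exists_pos_lt_mul_setIntegral_Icc hK hKpos hη M
  refine ⟨R, hR, fun γ hγ hM hext ↦ ?_⟩
  have hhK' : 𝓕 h = fun x ↦ (K x : ℂ) := funext hhK
  have hlim : Tendsto (fun y ↦ ∫ u in Set.Ioi 0, γ u * K (u - y)) atTop (𝓝 0) := by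
    have hlimC := hext.tendsto_integral_mul_fourier_sub (by fun_prop) (by simpa using hM) hc hs
      (hhK' ▸ hK.ofReal)
    simp only [hhK, ← ofReal_mul, integral_complex_ofReal] at hlimC
    rwa [← ofReal_zero, tendsto_ofReal_iff] at hlimC
  filter_upwards [eventually_gt_atTop R, hlim.eventually_lt_const (sub_pos.2 hlt)] with y hRy hy
  by_contra! hge
  exact hy.not_ge (mul_setIntegral_Icc_sub_le_integral_mul hK hKnonneg hγ hM hRy hge)

variable {β : ℝ → ℝ} {M : ℝ}

lemma LaplaceTransformExtends.eventually_exists_mem_Icc_lt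
    (hext : LaplaceTransformExtends fun u ↦ β u) (hβ : Measurable β) (hM : ∀ u > 0, |β u| ≤ M)
    {δ η : ℝ} (hδ : 0 < δ) (hη : 0 < η) :
    ∀ᶠ y in atTop, ∃ u ∈ Set.Icc (y - δ) (y + δ), β u < η := by
  obtain ⟨R, hR, hevent⟩ := exists_eventually_exists_mem_Icc_lt hη M
  -- Dilating `β` by `δ / R` turns windows of radius `R` into windows of radius `δ`.
  have hl : 0 < δ / R := div_pos hδ hR
  have hdil := hevent (fun u ↦ β (δ / R * u)) (by fun_prop) (fun u hu ↦ hM _ (mul_pos hl hu))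
    (hext.comp_mul_left hl)
  filter_upwards [(tendsto_id.atTop_div_const hl).eventually hdil] with y ⟨u, hu, hlt⟩
  refine ⟨δ / R * u, ?_, hlt⟩
  have hscale : δ / R * (y / (δ / R)) = y ∧ δ / R * R = δ := by constructor <;> field_simp
  have hlow := mul_le_mul_of_nonneg_left hu.1 hl.le
  have hupp := mul_le_mul_of_nonneg_left hu.2 hl.le
  simp only [id, mul_sub, mul_add, hscale] at hlow hupp
  exact ⟨hlow, hupp⟩

/-- Slow decrease in the sense of Schmidt: on short intervals far out, `β` drops by little. -/
def SlowlyDecreasing (β : ℝ → ℝ) : Prop :=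
  ∀ η > 0, ∃ δ > 0, ∀ᶠ y in atTop, ∀ u ∈ Set.Icc y (y + δ), β y - η ≤ β u

theorem LaplaceTransformExtends.tendsto_zero_of_slowlyDecreasing
    (hext : LaplaceTransformExtends fun u ↦ β u) (hslow : SlowlyDecreasing β) (hβ : Measurable β)
    (hM : ∀ u > 0, |β u| ≤ M) : Tendsto β atTop (𝓝 0) := by
  refine tendsto_order.2 ⟨fun a ha ↦ ?_, fun a ha ↦ ?_⟩
  · obtain ⟨δ, hδ, hdrop⟩ := hslow (-a / 2) (by linarith)
    have hhit : ∀ᶠ y in atTop, ∃ u ∈ Set.Icc (y - δ / 2) (y + δ / 2), -β u < -a / 2 :=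
      LaplaceTransformExtends.eventually_exists_mem_Icc_lt (by simpa using hext.neg) hβ.neg
        (by simpa using hM) (half_pos hδ) (by linarith)
    obtain ⟨Y, hY⟩ := eventually_atTop.1 hdrop
    filter_upwards [(tendsto_atTop_add_const_right _ (-(δ / 2)) tendsto_id).eventually hhit,
      eventually_ge_atTop (Y + δ)] with y ⟨u, hu, hlt⟩ hy
    simp only [id] at hu
    have hdrop_u := hY u (by linarith [hu.1]) y ⟨by linarith [hu.2], by linarith [hu.1]⟩
    linarith
  · obtain ⟨δ, hδ, hdrop⟩ := hslow (a / 2) (half_pos ha)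
    have hhit := hext.eventually_exists_mem_Icc_lt hβ hM (half_pos hδ) (half_pos ha)
    filter_upwards [(tendsto_atTop_add_const_right _ (δ / 2) tendsto_id).eventually hhit, hdrop]
      with y ⟨u, hu, hlt⟩ hdrop_y
    simp only [id] at hu
    linarith [hdrop_y u ⟨by linarith [hu.1], by linarith [hu.2]⟩]

lemma slowlyDecreasing_monotone_mul_exp_neg_sub {S : ℝ → ℝ} (hS : Monotone S)
    (hM : ∀ u > 0, |S u * rexp (-u)| ≤ M) (A : ℝ) :
    SlowlyDecreasing fun u ↦ S u * rexp (-u) - A := by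
  have hM0 : 0 ≤ M := (abs_nonneg _).trans (hM 1 one_pos)
  refine fun η hη ↦ ⟨η / (M + 1), by positivity, ?_⟩
  filter_upwards [eventually_gt_atTop 0] with y hy u ⟨hyu, huδ⟩
  have hδ : M * (u - y) ≤ η := by
    have hle : u - y ≤ η / (M + 1) := by linarith
    rw [le_div_iff₀ (by positivity)] at hle
    nlinarith
  have hexp : rexp (-u) = rexp (-y) * rexp (-(u - y)) := by
    rw [← Real.exp_add]
    ring_nf
  have hexp_ge : 1 - (u - y) ≤ rexp (-(u - y)) := Real.one_sub_le_exp_neg _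
  have hexp_le : rexp (-(u - y)) ≤ 1 := Real.exp_le_one_iff.2 (by linarith)
  have hSy : S y * rexp (-y) ≤ M := (abs_le.1 (hM y hy)).2
  have hSu : S y * rexp (-y) * rexp (-(u - y)) ≤ S u * rexp (-u) := by
    rw [mul_assoc, ← hexp]
    exact mul_le_mul_of_nonneg_right (hS hyu) (Real.exp_pos _).le
  nlinarith

theorem tendsto_monotone_mul_exp_neg_of_laplaceTransformExtends {S : ℝ → ℝ} (hS : Monotone S)
    (hM : ∀ u > 0, |S u * rexp (-u)| ≤ M) {A : ℝ}
    (hext : LaplaceTransformExtends fun u ↦ (S u * rexp (-u) - A : ℝ)) :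
    Tendsto (fun u ↦ S u * rexp (-u)) atTop (𝓝 A) := by
  have hmeas : Measurable fun u ↦ S u * rexp (-u) - A :=
    (hS.measurable.mul (by fun_prop)).sub_const A
  have hbdd (u : ℝ) (hu : u > 0) : |S u * rexp (-u) - A| ≤ M + |A| :=
    (abs_sub _ _).trans (add_le_add_left (hM u hu) _)
  have hlim := hext.tendsto_zero_of_slowlyDecreasing
    (slowlyDecreasing_monotone_mul_exp_neg_sub hS hM A) hmeas hbdd
  simpa using hlim.add_const A

end Tauberian

section WienerIkehara

open MeasureTheory Complex Real Topology Asymptotics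

lemma integral_Ioi_one_eq_integral_exp_smul {E : Type*} [NormedAddCommGroup E] [NormedSpace ℝ E]
    (g : ℝ → E) : ∫ t in Set.Ioi 1, g t = ∫ u in Set.Ioi 0, rexp u • g (rexp u) := by
  rw [← Real.exp_zero, ← Real.image_exp_Ioi]
  exact integral_image_eq_integral_deriv_smul_of_monotoneOn measurableSet_Ioi
    (fun u _ ↦ (Real.hasDerivAt_exp u).hasDerivWithinAt) (Real.exp_monotone.monotoneOn _) g

lemma laplaceTransform_const (A : ℂ) {s : ℂ} (hs : 0 < s.re) :
    laplaceTransform (fun _ ↦ A) s = A / s := by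
  have hexp := integral_exp_mul_complex_Ioi (a := -s) (by simpa using hs) 0
  simp only [neg_mul, ofReal_zero, mul_zero, Complex.exp_zero, neg_div_neg_eq] at hexp
  rw [laplaceTransform, integral_mul_const, hexp, one_div_mul_eq_div]

lemma add_one_ne_zero_of_re_nonneg {s : ℂ} (hs : 0 ≤ s.re) : s + 1 ≠ 0 := fun h ↦ by
  have hre := congrArg re h
  simp only [add_re, one_re, zero_re] at hre
  linarith

variable {f : ℕ → ℝ}

lemma laplaceTransform_sum_mul_exp_neg (hf : ∀ n, 0 ≤ f n)
    (hO : (fun n : ℕ ↦ ∑ k ∈ Icc 1 n, f k) =O[atTop] fun n ↦ (n : ℝ)) {s : ℂ} (hs : 0 < s.re) :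
    laplaceTransform (fun u ↦ ((∑ k ∈ Icc 1 ⌊rexp u⌋₊, f k) * rexp (-u) : ℝ)) s =
      LSeries (fun n ↦ f n) (s + 1) / (s + 1) := by
  rw [LSeries_eq_mul_integral_of_nonneg f zero_le_one (by simpa using hs) (by simpa using hO) hf,
    mul_div_cancel_left₀ _ (add_one_ne_zero_of_re_nonneg hs.le),
    integral_Ioi_one_eq_integral_exp_smul, laplaceTransform]
  refine setIntegral_congr_fun measurableSet_Ioi fun u _ ↦ ?_
  have hcpow : (rexp u : ℂ) ^ (-(s + 1 + 1)) = cexp (-(s + 1 + 1) * u) := by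
    rw [cpow_def_of_ne_zero (mod_cast (Real.exp_pos u).ne'), ← ofReal_log (Real.exp_pos u).le,
      Real.log_exp, mul_comm]
  have hexp : cexp u * cexp (-(s + 1 + 1) * u) = cexp (-(s * u)) * cexp (-u) := by
    rw [← Complex.exp_add, ← Complex.exp_add]
    ring_nf
  simp only [hcpow, real_smul]
  push_cast
  linear_combination -(∑ k ∈ Icc 1 ⌊rexp u⌋₊, (f k : ℂ)) * hexp

lemma exists_abs_sum_mul_exp_neg_le
    (hO : (fun n : ℕ ↦ ∑ k ∈ Icc 1 n, f k) =O[atTop] fun n ↦ (n : ℝ)) :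
    ∃ M, ∀ u > 0, |(∑ k ∈ Icc 1 ⌊rexp u⌋₊, f k) * rexp (-u)| ≤ M := by
  obtain ⟨C, hC, hbound⟩ := bound_of_isBigO_nat_atTop hO
  refine ⟨C, fun u hu ↦ ?_⟩
  have hfloor : (⌊rexp u⌋₊ : ℝ) ≠ 0 :=
    mod_cast (Nat.floor_pos.2 (Real.one_le_exp hu.le)).ne'
  rw [abs_mul, Real.abs_exp, Real.exp_neg, ← div_eq_mul_inv, div_le_iff₀ (Real.exp_pos u)]
  refine (hbound hfloor).trans ?_
  rw [Real.norm_natCast]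
  gcongr
  exact Nat.floor_le (Real.exp_pos u).le

lemma monotone_sum_Icc_floor_exp (hf : ∀ n, 0 ≤ f n) :
    Monotone fun u ↦ ∑ k ∈ Icc 1 ⌊rexp u⌋₊, f k := fun _ _ huv ↦
  sum_le_sum_of_subset_of_nonneg
    (Icc_subset_Icc_right (Nat.floor_mono (Real.exp_monotone huv))) fun n _ _ ↦ hf n

lemma laplaceTransform_sum_mul_exp_neg_sub (hf : ∀ n, 0 ≤ f n)
    (hO : (fun n : ℕ ↦ ∑ k ∈ Icc 1 n, f k) =O[atTop] fun n ↦ (n : ℝ)) (A : ℝ) {s : ℂ}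
    (hs : 0 < s.re) :
    laplaceTransform (fun u ↦ ((∑ k ∈ Icc 1 ⌊rexp u⌋₊, f k) * rexp (-u) - A : ℝ)) s =
      LSeries (fun n ↦ f n) (s + 1) / (s + 1) - A / s := by
  obtain ⟨M, hM⟩ := exists_abs_sum_mul_exp_neg_le hO
  have hmeas := (monotone_sum_Icc_floor_exp hf).measurable
  rw [← laplaceTransform_sum_mul_exp_neg hf hO hs, ← laplaceTransform_const _ hs]
  simp only [laplaceTransform, ofReal_sub, mul_sub]
  exact integral_sub
    (integrableOn_exp_neg_mul_Ioi_mul_of_bounded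
      (measurable_ofReal.comp (hmeas.mul (by fun_prop)))
      (fun u hu ↦ (norm_real _).trans_le (hM u hu)) hs)
    (integrableOn_exp_neg_mul_Ioi_mul_of_bounded measurable_const (fun _ _ ↦ le_rfl) hs)

lemma laplaceTransformExtends_sum_mul_exp_neg_sub (hf : ∀ n, 0 ≤ f n)
    (hO : (fun n : ℕ ↦ ∑ k ∈ Icc 1 n, f k) =O[atTop] fun n ↦ (n : ℝ)) {A : ℝ} {G : ℂ → ℂ}
    (hG : ContinuousOn G {s | 1 ≤ s.re})
    (hGf : Set.EqOn G (fun s ↦ LSeries (fun n ↦ f n) s - A / (s - 1)) {s | 1 < s.re}) :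
    LaplaceTransformExtends fun u ↦ ((∑ k ∈ Icc 1 ⌊rexp u⌋₊, f k) * rexp (-u) - A : ℝ) := by
  refine ⟨fun s ↦ (G (s + 1) - A) / (s + 1), ?_, fun s (hs : 0 < s.re) ↦ ?_⟩
  · have hshift : ContinuousOn (fun s ↦ G (s + 1)) {s | 0 ≤ s.re} :=
      hG.comp (f := fun s ↦ s + 1) (by fun_prop) fun s (hs : 0 ≤ s.re) ↦ by simpa using hs
    exact (hshift.sub continuousOn_const).div (by fun_prop) fun s ↦ add_one_ne_zero_of_re_nonneg
  · have hs0 : s ≠ 0 := fun h ↦ by simp [h] at hs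
    have hs1 := add_one_ne_zero_of_re_nonneg hs.le
    have hGs := hGf (show 1 < (s + 1).re by simpa using hs)
    simp only [add_sub_cancel_right] at hGs
    simp only [laplaceTransform_sum_mul_exp_neg_sub hf hO A hs, hGs]
    field_simp
    ring

theorem wiener_ikehara (hf : ∀ n, 0 ≤ f n)
    (hO : (fun n : ℕ ↦ ∑ k ∈ Icc 1 n, f k) =O[atTop] fun n ↦ (n : ℝ)) {A : ℝ} {G : ℂ → ℂ}
    (hG : ContinuousOn G {s | 1 ≤ s.re})
    (hGf : Set.EqOn G (fun s ↦ LSeries (fun n ↦ f n) s - A / (s - 1)) {s | 1 < s.re}) :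
    Tendsto (fun x ↦ (∑ k ∈ Icc 1 ⌊x⌋₊, f k) / x) atTop (𝓝 A) := by
  obtain ⟨M, hM⟩ := exists_abs_sum_mul_exp_neg_le hO
  have hlim := tendsto_monotone_mul_exp_neg_of_laplaceTransformExtends
    (monotone_sum_Icc_floor_exp hf) hM (laplaceTransformExtends_sum_mul_exp_neg_sub hf hO hG hGf)
  refine (hlim.comp tendsto_log_atTop).congr' ?_
  filter_upwards [eventually_gt_atTop 0] with x hx
  simp [Real.exp_neg, Real.exp_log hx, div_eq_mul_inv]

end WienerIkehara

section PrimeNumberTheorem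

open Topology Asymptotics Chebyshev ArithmeticFunction

theorem tendsto_sum_residueClass_div {q : ℕ} [NeZero q] {a : ZMod q} (ha : IsUnit a) :
    Tendsto (fun x : ℝ ↦ (∑ k ∈ Icc 1 ⌊x⌋₊, vonMangoldt.residueClass a k) / x) atTop
      (𝓝 (q.totient : ℝ)⁻¹) := by
  refine wiener_ikehara (vonMangoldt.residueClass_nonneg a) ?_
    (vonMangoldt.continuousOn_LFunctionResidueClassAux a)
    (by simpa using vonMangoldt.eqOn_LFunctionResidueClassAux ha)
  refine .of_bound (Real.log 4 + 4) (.of_forall fun n ↦ ?_)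
  rw [Real.norm_of_nonneg (sum_nonneg fun k _ ↦ vonMangoldt.residueClass_nonneg a k),
    Real.norm_natCast]
  calc ∑ k ∈ Icc 1 n, vonMangoldt.residueClass a k ≤ ∑ k ∈ Icc 1 n, vonMangoldt k :=
        sum_le_sum fun k _ ↦ vonMangoldt.residueClass_le a k
    _ = psi n := by rw [psi, Nat.floor_natCast]; rfl
    _ ≤ (Real.log 4 + 4) * n := psi_le_const_mul_self n.cast_nonneg

theorem isEquivalent_psi : psi ~[atTop] fun x ↦ x := by
  have hclass (n : ℕ) : vonMangoldt.residueClass (1 : ZMod 1) n = vonMangoldt n :=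
    Set.indicator_of_mem (s := {k : ℕ | (k : ZMod 1) = 1}) (Subsingleton.elim _ _) _
  have hlim := tendsto_sum_residueClass_div (isUnit_one (M := ZMod 1))
  simp only [hclass, Nat.totient_one, Nat.cast_one, inv_one] at hlim
  exact isEquivalent_of_tendsto_one hlim

lemma isLittleO_sqrt_atTop : Real.sqrt =o[atTop] fun x : ℝ ↦ x := by
  refine isLittleO_of_tendsto (by simp +contextual) ?_
  simp only [Real.sqrt_div_self', one_div]
  exact Real.tendsto_sqrt_atTop.inv_tendsto_atTop

theorem isEquivalent_theta : theta ~[atTop] fun x ↦ x := by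
  simpa using isEquivalent_psi.sub_isLittleO
    (isBigO_psi_sub_theta_sqrt.trans_isLittleO isLittleO_sqrt_atTop)

end PrimeNumberTheorem

section WeightedMeans

open Topology Asymptotics

variable {E : Type*} [NormedAddCommGroup E] [NormedSpace ℝ E] {a : ℕ → E} {c : E} {p r : ℕ → ℝ}

lemma sum_range_succ_sub_mul_sum (p r : ℕ → ℝ) (n : ℕ) :
    ∑ i ∈ range n, (r (i + 1) - r i) * ∑ j ∈ range (i + 1), p j =
      r n * ∑ j ∈ range (n + 1), p j - ∑ j ∈ range (n + 1), r j * p j := by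
  have hparts := sum_range_by_parts r p (n + 1)
  simp only [smul_eq_mul, add_tsub_cancel_right] at hparts
  linarith

lemma sum_abs_sub_mul_sum_of_monotone_or_antitone (hp : ∀ n, 0 ≤ p n)
    (hr : Monotone r ∨ Antitone r) (n : ℕ) :
    ∑ i ∈ range n, |r (i + 1) - r i| * ∑ j ∈ range (i + 1), p j =
      |r n * ∑ j ∈ range (n + 1), p j - ∑ j ∈ range (n + 1), r j * p j| := by
  have hP (i : ℕ) : 0 ≤ ∑ j ∈ range (i + 1), p j := sum_nonneg fun j _ ↦ hp j
  rw [← sum_range_succ_sub_mul_sum]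
  obtain hr | hr := hr
  · have hdiff (i : ℕ) : 0 ≤ r (i + 1) - r i := sub_nonneg.2 (hr i.le_succ)
    simp only [abs_of_nonneg (hdiff _), abs_sum_of_nonneg' fun i ↦ mul_nonneg (hdiff i) (hP i)]
  · have hdiff (i : ℕ) : 0 ≤ -(r (i + 1) - r i) := by simpa using hr i.le_succ
    rw [← abs_neg, ← sum_neg_distrib]
    simp only [← neg_mul]
    rw [abs_sum_of_nonneg' fun i ↦ mul_nonneg (hdiff i) (hP i)]
    simp only [← abs_neg (r _ - r _), abs_of_nonneg (hdiff _)]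

lemma isLittleO_sum_sub_smul_sum (hp : ∀ n, 0 ≤ p n) (hr0 : ∀ n, 0 ≤ r n)
    (hr : Monotone r ∨ Antitone r)
    (hO : (fun n ↦ r n * ∑ j ∈ range (n + 1), p j) =O[atTop]
      fun n ↦ ∑ j ∈ range (n + 1), r j * p j)
    (hQ : Tendsto (fun n ↦ ∑ j ∈ range n, r j * p j) atTop atTop)
    (ha : (fun n ↦ ∑ j ∈ range n, a j) =o[atTop] fun n ↦ ∑ j ∈ range n, p j) :
    (fun n ↦ ∑ i ∈ range n, (r (i + 1) - r i) • ∑ j ∈ range (i + 1), a j) =o[atTop]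
      fun n ↦ ∑ j ∈ range (n + 1), r j * p j := by
  have hq (n : ℕ) : 0 ≤ r n * p n := mul_nonneg (hr0 n) (hp n)
  have hP (i : ℕ) : 0 ≤ ∑ j ∈ range (i + 1), p j := sum_nonneg fun j _ ↦ hp j
  -- The summand `r i * p i` only makes the dominating series diverge.
  let g (i : ℕ) : ℝ := |r (i + 1) - r i| * ∑ j ∈ range (i + 1), p j + r i * p i
  have hqg (i : ℕ) : r i * p i ≤ g i :=
    le_add_of_nonneg_left (mul_nonneg (abs_nonneg _) (hP i))
  have hterm : (fun i ↦ (r (i + 1) - r i) • ∑ j ∈ range (i + 1), a j) =o[atTop] g := by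
    refine ((isBigO_refl (fun i ↦ r (i + 1) - r i) atTop).smul_isLittleO
      (ha.comp_tendsto (tendsto_add_atTop_nat 1))).trans_isBigO (.of_norm_le fun i ↦ ?_)
    rw [Function.comp_apply, norm_smul, Real.norm_eq_abs, Real.norm_of_nonneg (hP i)]
    exact le_add_of_nonneg_right (hq i)
  refine (hterm.sum_range (fun i ↦ (hq i).trans (hqg i))
    (tendsto_atTop_mono (fun n ↦ sum_le_sum fun i _ ↦ hqg i) hQ)).trans_isBigO ?_
  simp only [g, sum_add_distrib, sum_abs_sub_mul_sum_of_monotone_or_antitone hp hr]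
  refine (hO.sub (isBigO_refl _ _)).norm_left.add (.of_norm_le fun n ↦ ?_)
  rw [Real.norm_of_nonneg (sum_nonneg fun i _ ↦ hq i), sum_range_succ]
  exact le_add_of_nonneg_right (hq n)

theorem isLittleO_sum_smul_of_monotone_or_antitone (hp : ∀ n, 0 ≤ p n) (hr0 : ∀ n, 0 ≤ r n)
    (hr : Monotone r ∨ Antitone r)
    (hO : (fun n ↦ r n * ∑ j ∈ range (n + 1), p j) =O[atTop]
      fun n ↦ ∑ j ∈ range (n + 1), r j * p j)
    (hQ : Tendsto (fun n ↦ ∑ j ∈ range n, r j * p j) atTop atTop)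
    (ha : (fun n ↦ ∑ j ∈ range n, a j) =o[atTop] fun n ↦ ∑ j ∈ range n, p j) :
    (fun n ↦ ∑ j ∈ range n, r j • a j) =o[atTop] fun n ↦ ∑ j ∈ range n, r j * p j := by
  have hlast : (fun n ↦ r n • ∑ j ∈ range (n + 1), a j) =o[atTop]
      fun n ↦ ∑ j ∈ range (n + 1), r j * p j :=
    ((isBigO_refl r atTop).smul_isLittleO
      (ha.comp_tendsto (tendsto_add_atTop_nat 1))).trans_isBigO hO
  rw [← map_add_atTop_eq_nat 1, isLittleO_map]
  refine (hlast.sub (isLittleO_sum_sub_smul_sum hp hr0 hr hO hQ ha)).congr_left fun n ↦ ?_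
  simpa using (sum_range_by_parts r a (n + 1)).symm

lemma tendsto_centerMass_range_iff (hp : ∀ n, 0 < p n) :
    Tendsto (fun n ↦ (range n).centerMass p a) atTop (𝓝 c) ↔
      (fun n ↦ ∑ j ∈ range n, p j • (a j - c)) =o[atTop] fun n ↦ ∑ j ∈ range n, p j := by
  have hsum_ne : ∀ᶠ n in atTop, ∑ j ∈ range n, p j ≠ 0 := by
    filter_upwards [eventually_ne_atTop 0] with n hn
    exact (sum_pos (fun j _ ↦ hp j) (nonempty_range_iff.2 hn)).ne'
  have hcenter : (fun n ↦ (range n).centerMass p a - c) =ᶠ[atTop]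
      fun n ↦ (∑ j ∈ range n, p j)⁻¹ • ∑ j ∈ range n, p j • (a j - c) := by
    filter_upwards [hsum_ne] with n hn
    rw [centerMass]
    simp only [smul_sub, sum_sub_distrib, ← sum_smul, inv_smul_smul₀ hn]
  rw [← tendsto_sub_nhds_zero_iff, tendsto_congr' hcenter]
  refine ⟨fun h ↦ ?_, IsLittleO.tendsto_inv_smul_nhds_zero⟩
  refine ((isBigO_refl (fun n ↦ ∑ j ∈ range n, p j) atTop).smul_isLittleO
    ((isLittleO_one_iff ℝ).2 h)).congr' ?_ (by simp)
  filter_upwards [hsum_ne] with n hn using smul_inv_smul₀ hn _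

theorem tendsto_centerMass_mul_of_monotone_or_antitone (hp : ∀ n, 0 < p n) (hr0 : ∀ n, 0 < r n)
    (hr : Monotone r ∨ Antitone r)
    (hO : (fun n ↦ r n * ∑ j ∈ range (n + 1), p j) =O[atTop]
      fun n ↦ ∑ j ∈ range (n + 1), r j * p j)
    (hQ : Tendsto (fun n ↦ ∑ j ∈ range n, r j * p j) atTop atTop)
    (ha : Tendsto (fun n ↦ (range n).centerMass p a) atTop (𝓝 c)) :
    Tendsto (fun n ↦ (range n).centerMass (fun j ↦ r j * p j) a) atTop (𝓝 c) := by
  rw [tendsto_centerMass_range_iff fun n ↦ mul_pos (hr0 n) (hp n)]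
  simp only [mul_smul]
  exact isLittleO_sum_smul_of_monotone_or_antitone (fun n ↦ (hp n).le) (fun n ↦ (hr0 n).le) hr hO
    hQ ((tendsto_centerMass_range_iff hp).1 ha)

lemma centerMass_range_one (n : ℕ) :
    (range n).centerMass (fun _ ↦ (1 : ℝ)) a = (n : ℝ)⁻¹ • ∑ j ∈ range n, a j := by
  simp [centerMass]

theorem tendsto_centerMass_iff_of_monotone {w : ℕ → ℝ} (hw0 : ∀ n, 0 < w n) (hw : Monotone w)
    (hO : (fun n : ℕ ↦ w n * (n + 1 : ℕ)) =O[atTop] fun n ↦ ∑ j ∈ range (n + 1), w j) :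
    Tendsto (fun n ↦ (range n).centerMass w a) atTop (𝓝 c) ↔
      Tendsto (fun n : ℕ ↦ (n : ℝ)⁻¹ • ∑ j ∈ range n, a j) atTop (𝓝 c) := by
  simp only [← centerMass_range_one]
  constructor <;> intro h
  · have hcancel (j : ℕ) : (w j)⁻¹ * w j = 1 := inv_mul_cancel₀ (hw0 j).ne'
    have hinv := tendsto_centerMass_mul_of_monotone_or_antitone (r := fun j ↦ (w j)⁻¹) hw0
      (fun n ↦ inv_pos.2 (hw0 n)) (.inr fun m n hmn ↦ inv_anti₀ (hw0 m) (hw hmn)) ?_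
      (by simpa [hcancel] using tendsto_natCast_atTop_atTop) h
    · simpa only [hcancel] using hinv
    · refine .of_norm_le fun n ↦ ?_
      rw [mul_sum, Real.norm_of_nonneg
        (sum_nonneg fun j _ ↦ mul_nonneg (inv_pos.2 (hw0 n)).le (hw0 j).le)]
      refine sum_le_sum fun j hj ↦ ?_
      gcongr
      · exact (hw0 j).le
      · exact hw0 j
      · exact hw (Nat.lt_succ_iff.1 (mem_range.1 hj))
  · have hdiv : Tendsto (fun n ↦ ∑ j ∈ range n, w j) atTop atTop := by
      refine tendsto_atTop_mono (fun n ↦ ?_)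
        (tendsto_natCast_atTop_atTop.atTop_mul_const (hw0 0))
      simpa using card_nsmul_le_sum (range n) w (w 0) fun j _ ↦ hw (Nat.zero_le j)
    simpa using tendsto_centerMass_mul_of_monotone_or_antitone (p := fun _ ↦ 1)
      (fun _ ↦ one_pos) hw0 (.inl hw) (by simpa using hO) (by simpa using hdiv) h

end WeightedMeans

section PrimeIndexedMeans

open Topology Asymptotics Chebyshev
open Nat (nth primeCounting)

lemma sum_range_count_nth {M : Type*} [AddCommMonoid M] (P : ℕ → Prop) [DecidablePred P]
    (g : ℕ → M) (n : ℕ) :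
    ∑ j ∈ range (Nat.count P n), g (nth P j) = ∑ k ∈ range n with P k, g k := by
  induction n with
  | zero => simp
  | succ n ih =>
    rw [Nat.count_succ, range_add_one, filter_insert]
    split_ifs with hn
    · rw [sum_range_succ, ih, Nat.nth_count hn, sum_insert (by simp), add_comm]
    · exact ih

lemma sum_range_primeCounting_log_nth_prime (N : ℕ) :
    ∑ j ∈ range (primeCounting N), Real.log (nth Nat.Prime j) = theta N := by
  rw [theta_eq_sum_primesLE_log, Nat.primesLE_eq_filter_range]
  exact sum_range_count_nth Nat.Prime (fun k ↦ Real.log k) (N + 1)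

lemma primeCounting_nth_prime (n : ℕ) : primeCounting (nth Nat.Prime n) = n + 1 :=
  Nat.count_nth_succ_of_infinite Nat.infinite_setOfPred_prime n

lemma map_primeCounting_atTop : map primeCounting atTop = atTop := by
  have hcount : map Nat.primeCounting' atTop = atTop :=
    map_atTop_eq_of_gc (nth Nat.Prime) 0 Nat.monotone_primeCounting'
      (fun n k _ ↦ Nat.gc_count_nth Nat.infinite_setOfPred_prime n k)
      fun k _ ↦ (Nat.primeCounting'_nth_eq k).ge
  change map (Nat.primeCounting' ∘ (· + 1)) atTop = atTop
  rw [← Filter.map_map, map_add_atTop_eq_nat, hcount]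

lemma log_nth_prime_pos (n : ℕ) : 0 < Real.log (nth Nat.Prime n) :=
  Real.log_pos (mod_cast (Nat.prime_nth_prime n).one_lt)

lemma monotone_log_nth_prime : Monotone fun n ↦ Real.log (nth Nat.Prime n) := fun m _ hmn ↦
  Real.log_le_log (mod_cast (Nat.prime_nth_prime m).pos)
    (mod_cast Nat.nth_monotone Nat.infinite_setOfPred_prime hmn)

lemma isBigO_log_mul_primeCounting_theta :
    (fun x ↦ Real.log x * primeCounting ⌊x⌋₊) =O[atTop] theta := by
  refine .trans (.of_bound (Real.log 4 + 1) ?_) isEquivalent_theta.isBigO_symm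
  filter_upwards [eventually_primeCounting_le one_pos, eventually_gt_atTop 1] with x hπ hx
  have hlog := Real.log_pos hx
  rw [le_div_iff₀ hlog, mul_comm] at hπ
  rwa [Real.norm_of_nonneg (by positivity), Real.norm_of_nonneg (by positivity)]

lemma isBigO_log_nth_prime_mul_succ :
    (fun n : ℕ ↦ Real.log (nth Nat.Prime n) * (n + 1 : ℕ)) =O[atTop]
      fun n ↦ ∑ j ∈ range (n + 1), Real.log (nth Nat.Prime j) := by
  have hnth : Tendsto (fun n ↦ (nth Nat.Prime n : ℝ)) atTop atTop :=
    tendsto_natCast_atTop_atTop.comp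
      (Nat.nth_strictMono Nat.infinite_setOfPred_prime).tendsto_atTop
  refine (isBigO_log_mul_primeCounting_theta.comp_tendsto hnth).congr (fun n ↦ ?_) fun n ↦ ?_
  · rw [Function.comp_apply, Nat.floor_natCast, primeCounting_nth_prime]
  · rw [Function.comp_apply, ← sum_range_primeCounting_log_nth_prime, primeCounting_nth_prime]

variable {E : Type*} [NormedAddCommGroup E] [NormedSpace ℝ E] {a : ℕ → E} {c : E}

lemma tendsto_centerMass_log_nth_prime_iff :
    Tendsto (fun n ↦ (range n).centerMass (fun j ↦ Real.log (nth Nat.Prime j)) a) atTop (𝓝 c) ↔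
      Tendsto (fun N : ℕ ↦ (N : ℝ)⁻¹ • ∑ j ∈ range (primeCounting N),
        Real.log (nth Nat.Prime j) • a j) atTop (𝓝 c) := by
  have htheta : (fun N : ℕ ↦ theta N) ~[atTop] fun N ↦ (N : ℝ) :=
    isEquivalent_theta.comp_tendsto tendsto_natCast_atTop_atTop
  rw [← map_primeCounting_atTop, tendsto_map'_iff, map_primeCounting_atTop]
  simp only [Function.comp_def, centerMass, sum_range_primeCounting_log_nth_prime]
  exact (htheta.inv.smul .refl).tendsto_nhds_iff

end PrimeIndexedMeans

theorem stmt19_general {E : Type*} [NormedAddCommGroup E] [NormedSpace ℝ E] (t : ℕ → E) (c : E) :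
    Tendsto (fun n : ℕ ↦ (n : ℝ)⁻¹ • ∑ j ∈ range n, t (Nat.nth Nat.Prime j)) atTop (nhds c) ↔
      Tendsto (fun N : ℕ ↦ (N : ℝ)⁻¹ • ∑ j ∈ range (Nat.primeCounting N),
        Real.log (Nat.nth Nat.Prime j) • t (Nat.nth Nat.Prime j)) atTop (nhds c) := by
  rw [← tendsto_centerMass_log_nth_prime_iff]
  exact (tendsto_centerMass_iff_of_monotone log_nth_prime_pos monotone_log_nth_prime
    isBigO_log_nth_prime_mul_succ).symm

/-- Let `(t_k)` be a sequence of reals. Then `(1/n) ∑_{j=1}^n t_{p_j}`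
converges as `n → ∞` if and only if `(1/N) ∑_{j=1}^{π(N)} t_{p_j} log p_j` converges as
`N → ∞`. -/
theorem stmt19 (t : ℕ → ℝ) :
    (∃ c : ℝ, Tendsto (fun n : ℕ =>
        (n : ℝ)⁻¹ * ∑ j ∈ range n, t (Nat.nth Nat.Prime j)) atTop (nhds c)) ↔
    (∃ c : ℝ, Tendsto (fun N : ℕ =>
        (N : ℝ)⁻¹ * ∑ j ∈ range (Nat.primeCounting N),
          t (Nat.nth Nat.Prime j) * Real.log (Nat.nth Nat.Prime j)) atTop (nhds c)) := by
  simpa only [smul_eq_mul, mul_comm (Real.log _)] using exists_congr (stmt19_general t)
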